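/- Let X be a set and let d, m : X × X → [0,∞] both satisfy axioms (0), (Σ) and (Δ), with d ≤ m pointwise. Suppose that d(x,y) > 0 for all x ≠ y, and that there is a finite subset S ⊆ X such that d(u,v) = m(u,v) whenever it is not the case that both u ∈ S and v ∈ S. Then d and m induce the same topology on X, i.e., ψ(d) = ψ(m). -/

import Mathlib

open scoped ENNReal

/-- Axiom (0). -/
def Ax0 {X : Type*} (d : X × X → ℝ≥0∞) : Prop := ∀ x : X, d (x, x) = 0

/-- Axiom (Σ). -/
def AxSym {X : Type*} (d : X × X → ℝ≥0∞) : Prop := ∀ x y : X, d (x, y) = d (y, x)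

/-- Axiom (Δ). -/
def AxTri {X : Type*} (d : X × X → ℝ≥0∞) : Prop :=
  ∀ x y z : X, d (x, z) ≤ d (x, y) + d (y, z)

/-- `ψ(d)`: the topology generated by the balls of `d` as a subbasis. -/
def psi {X : Type*} (d : X × X → ℝ≥0∞) : TopologicalSpace X :=
  TopologicalSpace.generateFrom
    {s : Set X | ∃ (x : X) (ε : ℝ≥0∞), 0 < ε ∧ s = {y : X | d (x, y) < ε}}

/-!
By the triangle inequality, the `ψ(d)`-neighbourhood filter of `x` is the pullback of `𝓝 0` along
`d (x, ·)`. If `d (x, ·)` and `m (x, ·)` vanish at the same points and differ at only finitely many,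
then `d (x, ·)` takes only finitely many values, all nonzero, where they differ. Hence they coincide
wherever `d (x, ·)` is close enough to `0`, and likewise wherever `m (x, ·)` is, so both pull `𝓝 0`
back to the same filter.
-/

open Filter Set Topology

section ComapNhds

variable {α β : Type*} [TopologicalSpace β] [T1Space β] {f g : α → β} {b : β}

theorem eventuallyEq_comap_nhds_of_finite_ne (hb : ∀ x, f x = b → g x = b)
    (hfin : {x | f x ≠ g x}.Finite) : f =ᶠ[comap f (𝓝 b)] g := by
  have hb_notMem : b ∉ f '' {x | f x ≠ g x} := by
    rintro ⟨x, hne, hx⟩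
    exact hne (hx.trans (hb x hx).symm)
  have h_compl : (f '' {x | f x ≠ g x})ᶜ ∈ 𝓝 b :=
    (hfin.image f).isClosed.compl_mem_nhds hb_notMem
  filter_upwards [preimage_mem_comap h_compl] with x hx
  by_contra hne
  exact hx (mem_image_of_mem f hne)

theorem comap_nhds_le_of_finite_ne (hb : ∀ x, f x = b → g x = b)
    (hfin : {x | f x ≠ g x}.Finite) : comap f (𝓝 b) ≤ comap g (𝓝 b) :=
  (tendsto_comap.congr' (eventuallyEq_comap_nhds_of_finite_ne hb hfin)).le_comap

theorem comap_nhds_eq_of_finite_ne (hb : ∀ x, f x = b ↔ g x = b)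
    (hfin : {x | f x ≠ g x}.Finite) : comap f (𝓝 b) = comap g (𝓝 b) :=
  le_antisymm (comap_nhds_le_of_finite_ne (fun x => (hb x).mp) hfin)
    (comap_nhds_le_of_finite_ne (fun x => (hb x).mpr) (by simpa only [ne_comm] using hfin))

end ComapNhds

section Psi

variable {X : Type*} {d m : X × X → ℝ≥0∞}

/-- The ball `B_d(x, ε)`, the subbasic sets of `psi d` being those with `0 < ε`. -/
def weightBall (d : X × X → ℝ≥0∞) (x : X) (ε : ℝ≥0∞) : Set X :=
  {y | d (x, y) < ε}

theorem hasBasis_comap_nhds_zero_weightBall (d : X × X → ℝ≥0∞) (x : X) :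
    (comap (fun y => d (x, y)) (𝓝 0)).HasBasis (0 < ·) (weightBall d x) :=
  ENNReal.nhds_zero_basis.comap _

theorem isOpen_psi_weightBall (x : X) {ε : ℝ≥0∞} (hε : 0 < ε) :
    IsOpen[psi d] (weightBall d x ε) :=
  TopologicalSpace.isOpen_generateFrom_of_mem ⟨x, ε, hε, rfl⟩

theorem weightBall_mem_nhds_psi (h0 : Ax0 d) (x : X) {ε : ℝ≥0∞} (hε : 0 < ε) :
    weightBall d x ε ∈ @nhds X (psi d) x :=
  let _ := psi d
  (isOpen_psi_weightBall x hε).mem_nhds ((h0 x).trans_lt hε)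

theorem weightBall_tsub_subset (hT : AxTri d) (c x : X) (ε : ℝ≥0∞) :
    weightBall d x (ε - d (c, x)) ⊆ weightBall d c ε :=
  fun y hy => (hT c x y).trans_lt (lt_tsub_iff_left.mp hy)

theorem nhds_psi (h0 : Ax0 d) (hT : AxTri d) (x : X) :
    @nhds X (psi d) x = comap (fun y => d (x, y)) (𝓝 0) := by
  apply le_antisymm
  · exact (hasBasis_comap_nhds_zero_weightBall d x).ge_iff.mpr fun _ hε =>
      weightBall_mem_nhds_psi h0 x hε
  · rw [psi, TopologicalSpace.nhds_generateFrom (a := x)]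
    refine le_iInf₂ fun s hs => le_principal_iff.mpr ?_
    obtain ⟨hx, c, ε, -, rfl⟩ := hs
    exact mem_of_superset ((hasBasis_comap_nhds_zero_weightBall d x).mem_of_mem (tsub_pos_of_lt hx))
      (weightBall_tsub_subset hT c x ε)

theorem eq_zero_iff_of_le_of_pos (h0 : Ax0 m) (hdm : d ≤ m)
    (hpos : ∀ x y, x ≠ y → 0 < d (x, y)) (x y : X) : d (x, y) = 0 ↔ m (x, y) = 0 := by
  refine ⟨fun hd => ?_, fun hm => le_zero_iff.mp ((hdm (x, y)).trans_eq hm)⟩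
  obtain rfl : x = y := of_not_not fun hxy => (hpos x y hxy).ne' hd
  exact h0 x

theorem stmt16_general (h0d : Ax0 d) (hTd : AxTri d) (hTm : AxTri m)
    (hzero : ∀ x y, d (x, y) = 0 ↔ m (x, y) = 0)
    (hfin : ∀ x, {y | d (x, y) ≠ m (x, y)}.Finite) :
    psi d = psi m := by
  have h0m : Ax0 m := fun x => (hzero x x).mp (h0d x)
  refine TopologicalSpace.ext_nhds fun x => ?_
  rw [nhds_psi h0d hTd, nhds_psi h0m hTm]
  exact comap_nhds_eq_of_finite_ne (hzero x) (hfin x)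

end Psi

/-- If `d ≤ m` both satisfy (0), (Σ), (Δ), `d` is positive off the
diagonal, and `d` and `m` agree except possibly on pairs from a finite set `S`, then
`ψ(d) = ψ(m)`. -/
theorem stmt16 (X : Type*) (d m : X × X → ℝ≥0∞)
    (h0d : Ax0 d) (hSd : AxSym d) (hTd : AxTri d)
    (h0m : Ax0 m) (hSm : AxSym m) (hTm : AxTri m)
    (hdm : d ≤ m)
    (hpos : ∀ x y : X, x ≠ y → 0 < d (x, y))
    (S : Set X) (hS : S.Finite)
    (heq : ∀ u v : X, ¬(u ∈ S ∧ v ∈ S) → d (u, v) = m (u, v)) :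
    psi d = psi m := by
  exact stmt16_general h0d hTd hTm (eq_zero_iff_of_le_of_pos h0m hdm hpos) fun x =>
    hS.subset fun y hne => (of_not_not (mt (heq x y) hne)).2
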